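/- Let Ω ⊂ ℂⁿ be a bounded convex domain. Then for all distinct x, y ∈ Ω and every boundary point ξ ∈ ∂Ω lying on the complex line x + ℂ(x−y), the Kobayashi distance satisfies K_Ω(x,y) ≥ ½ log(|x−ξ|/|y−ξ|). -/

import Mathlib

open Metric Set MeasureTheory Filter Topology

noncomputable section

variable {E : Type*} [NormedAddCommGroup E] [NormedSpace ℂ E]

/-- Distance from `x` to the boundary of `D`. -/
def bdist (D : Set E) (x : E) : ℝ := Metric.infDist x (frontier D)

/-- Distance from `x` to the boundary of `D` along the complex line `x + ℂ v`. -/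
def bdistDir (D : Set E) (x v : E) : ℝ :=
  Metric.infDist x (frontier D ∩ {w | ∃ c : ℂ, w = x + c • v})

/-- The infinitesimal Kobayashi (pseudo-)metric of `D ⊆ E`. -/
def kobMetric (D : Set E) (x v : E) : ℝ :=
  sInf { r : ℝ | ∃ (f : ℂ → E) (ξ : ℂ),
    DifferentiableOn ℂ f (ball (0:ℂ) 1) ∧ MapsTo f (ball (0:ℂ) 1) D ∧
    f 0 = x ∧ ξ • derivWithin f (ball (0:ℂ) 1) 0 = v ∧ r = ‖ξ‖ }

/-- `σ` is absolutely continuous on `[a,b]`, with a.e. derivative `g`. -/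
def IsACWithDeriv (σ g : ℝ → E) (a b : ℝ) : Prop :=
  IntervalIntegrable g volume a b ∧
  ∀ t ∈ Icc a b, σ t = σ a + ∫ s in a..t, g s

/-- The Kobayashi pseudo-distance of `D`, defined via lengths of absolutely
continuous curves (Venturini's description). -/
def kobDist (D : Set E) (x y : E) : ℝ :=
  sInf { r : ℝ | ∃ (a b : ℝ) (σ g : ℝ → E), a ≤ b ∧
    IsACWithDeriv σ g a b ∧ MapsTo σ (Icc a b) D ∧ σ a = x ∧ σ b = y ∧
    r = ∫ t in a..b, kobMetric D (σ t) (g t) }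

/-- Log-type convex domain, with explicit constants `C, ν > 0`. -/
def LogTypeConvexWith (D : Set E) (C ν : ℝ) : Prop :=
  IsOpen D ∧ D.Nonempty ∧ Bornology.IsBounded D ∧ Convex ℝ D ∧ 0 < C ∧ 0 < ν ∧
  ∀ z ∈ D, ∀ v : E, v ≠ 0 →
    bdistDir D z v ≤ C / |Real.log (bdist D z)| ^ (1 + ν)

/-- Log-type convex domain. -/
def LogTypeConvex (D : Set E) : Prop := ∃ C ν : ℝ, LogTypeConvexWith D C ν

/-- A `ℂ`-convex set: every nonempty intersection with a complex affine line is
connected and simply connected. -/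
def CConvex (D : Set E) : Prop :=
  ∀ z v : E, v ≠ 0 → (D ∩ {w | ∃ c : ℂ, w = z + c • v}).Nonempty →
    IsConnected (D ∩ {w | ∃ c : ℂ, w = z + c • v}) ∧
    SimplyConnectedSpace ↥(D ∩ {w | ∃ c : ℂ, w = z + c • v})

/-- Log-type `ℂ`-convex domain. -/
def LogTypeCConvex (D : Set E) : Prop :=
  IsOpen D ∧ D.Nonempty ∧ Bornology.IsBounded D ∧ CConvex D ∧
  ∃ C ν : ℝ, 0 < C ∧ 0 < ν ∧
    ∀ z ∈ D, ∀ v : E, v ≠ 0 →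
      bdistDir D z v ≤ C / |Real.log (bdist D z)| ^ (1 + ν)

/-- `σ : [a,b] → D` (with a.e. derivative `g`) is a `(λ,κ)`-almost geodesic for the
Kobayashi distance of `D`. -/
def AlmostGeodesicOn (D : Set E) (lam kap : ℝ) (σ g : ℝ → E) (a b : ℝ) : Prop :=
  MapsTo σ (Icc a b) D ∧ IsACWithDeriv σ g a b ∧
  (∀ s ∈ Icc a b, ∀ t ∈ Icc a b,
    (1 / lam) * |t - s| - kap ≤ kobDist D (σ s) (σ t) ∧
    kobDist D (σ s) (σ t) ≤ lam * |t - s| + kap) ∧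
  (∀ᵐ t ∂volume, t ∈ Icc a b → kobMetric D (σ t) (g t) ≤ lam)

/-- `σ : [a,b] → D` is a `C`-rough geodesic for the Kobayashi distance of `D`. -/
def RoughGeodesicOn (D : Set E) (C : ℝ) (σ : ℝ → E) (a b : ℝ) : Prop :=
  MapsTo σ (Icc a b) D ∧
  ∀ s ∈ Icc a b, ∀ t ∈ Icc a b,
    |t - s| - C ≤ kobDist D (σ s) (σ t) ∧ kobDist D (σ s) (σ t) ≤ |t - s| + C

/-- `ρ` is a `C¹` local defining function for `D` near `ξ` on the open set `W`. -/
def IsLocalDefiningFn (D : Set E) (ξ : E) (W : Set E) (ρ : E → ℝ) : Prop :=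
  IsOpen W ∧ ξ ∈ W ∧ ContDiffOn ℝ 1 ρ W ∧ (∀ x ∈ W, fderiv ℝ ρ x ≠ 0) ∧
  D ∩ W = {x ∈ W | ρ x < 0} ∧ frontier D ∩ W = {x ∈ W | ρ x = 0}

/-- `ξ` is a Dini-smooth boundary point of `D`: the boundary is `C¹` near `ξ` and the
unit normal admits a modulus of continuity `ω` satisfying the Dini condition. -/
def DiniSmoothBoundaryPoint (D : Set E) (ξ : E) : Prop :=
  ∃ (W : Set E) (ρ : E → ℝ) (ω : ℝ → ℝ),
    IsLocalDefiningFn D ξ W ρ ∧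
    (∀ t ∈ Icc (0:ℝ) 1, 0 ≤ ω t) ∧ MonotoneOn ω (Icc (0:ℝ) 1) ∧
    IntegrableOn (fun t => ω t / t) (Ioc (0:ℝ) 1) ∧
    ∀ x ∈ frontier D ∩ W, ∀ y ∈ frontier D ∩ W, ‖x - y‖ ≤ 1 →
      ‖(‖fderiv ℝ ρ x‖)⁻¹ • fderiv ℝ ρ x - (‖fderiv ℝ ρ y‖)⁻¹ • fderiv ℝ ρ y‖ ≤ ω ‖x - y‖

/-- `D` has `C^{1,ε}` boundary: near every boundary point there is a `C¹` defining
function whose differential is `ε`-Hölder. -/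
def HolderC1Boundary (D : Set E) (ε : ℝ) : Prop :=
  ∀ ξ ∈ frontier D, ∃ (W : Set E) (ρ : E → ℝ) (M : ℝ), 0 < M ∧
    IsLocalDefiningFn D ξ W ρ ∧
    ∀ x ∈ W, ∀ y ∈ W, ‖fderiv ℝ ρ x - fderiv ℝ ρ y‖ ≤ M * ‖x - y‖ ^ ε

/-- The complex affine tangent hyperplane of `∂D` at `x`, computed from a local
defining function `ρ`. -/
def complexTangentHyperplane (ρ : E → ℝ) (x : E) : Set E :=
  {w : E | fderiv ℝ ρ x (w - x) = 0 ∧ fderiv ℝ ρ x ((Complex.I : ℂ) • (w - x)) = 0}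

/-- The Gromov product of `x` and `y` with respect to the base point `o`, for the
Kobayashi distance of `D`. -/
def gromovProd (D : Set E) (o x y : E) : ℝ :=
  (kobDist D x o + kobDist D o y - kobDist D x y) / 2

end


/-- Schwarz lemma for maps of the disc into the right half plane. -/
lemma aux_halfplane (F : ℂ → ℂ) (hF : DifferentiableOn ℂ F (ball (0:ℂ) 1))
    (hpos : ∀ z ∈ ball (0:ℂ) 1, 0 < (F z).re) : ‖deriv F 0‖ ≤ 2 * (F 0).re := by
  have h0 : (0:ℂ) ∈ ball (0:ℂ) 1 := by simp
  set w := F 0 with hw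
  have hwpos : 0 < w.re := hpos 0 h0
  have hne : ∀ z ∈ ball (0:ℂ) 1, F z + (starRingEnd ℂ) w ≠ 0 := by
    intro z hz h
    have := congrArg Complex.re h
    simp at this
    linarith [hpos z hz]
  let G : ℂ → ℂ := fun z => (F z - w) / (F z + (starRingEnd ℂ) w)
  have hGd : DifferentiableOn ℂ G (ball (0:ℂ) 1) :=
    (hF.sub_const _).div (hF.add_const _) hne
  have hG0 : G 0 = 0 := by simp [G, ← hw]
  have hmaps : MapsTo G (ball (0:ℂ) 1) (closedBall (G 0) 1) := by
    intro z hz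
    rw [hG0, mem_closedBall_zero_iff, norm_div, div_le_one (norm_pos_iff.2 (hne z hz))]
    have : ‖F z - w‖ ^ 2 ≤ ‖F z + (starRingEnd ℂ) w‖ ^ 2 := by
      rw [← Complex.normSq_eq_norm_sq, ← Complex.normSq_eq_norm_sq, Complex.normSq_apply,
        Complex.normSq_apply]
      simp
      nlinarith [hpos z hz, mul_pos (hpos z hz) hwpos]
    exact le_of_sq_le_sq this (norm_nonneg _)
  have h1 := Complex.norm_deriv_le_one_of_mapsTo_ball hGd hmaps one_pos
  have hFd : DifferentiableAt ℂ F 0 := (hF 0 h0).differentiableAt (isOpen_ball.mem_nhds h0)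
  have hder : HasDerivAt G (deriv F 0 / (w + (starRingEnd ℂ) w)) 0 := by
    have h2 := (hFd.hasDerivAt.sub_const w).div (hFd.hasDerivAt.add_const ((starRingEnd ℂ) w))
      (hne 0 h0)
    convert! h2 using 1
    have := hne 0 h0
    rw [← hw] at this ⊢
    field_simp
    ring
  rw [hder.deriv, Complex.add_conj, norm_div, Complex.norm_real, Real.norm_eq_abs,
    abs_of_pos (by linarith), div_le_one (by linarith)] at h1
  exact h1

lemma kob_bddBelow {E : Type*} [NormedAddCommGroup E] [NormedSpace ℂ E] (D : Set E) (x v : E) :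
    BddBelow { r : ℝ | ∃ (f : ℂ → E) (ξ : ℂ),
    DifferentiableOn ℂ f (ball (0:ℂ) 1) ∧ MapsTo f (ball (0:ℂ) 1) D ∧
    f 0 = x ∧ ξ • derivWithin f (ball (0:ℂ) 1) 0 = v ∧ r = ‖ξ‖ } :=
  ⟨0, by rintro r ⟨f, ξ, -, -, -, -, rfl⟩; exact norm_nonneg _⟩

lemma kob_nonneg {E : Type*} [NormedAddCommGroup E] [NormedSpace ℂ E] (D : Set E) (x v : E) :
    0 ≤ kobMetric D x v :=
  Real.sInf_nonneg (by rintro r ⟨f, ξ, -, -, -, -, rfl⟩; exact norm_nonneg _)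

lemma kob_mem {E : Type*} [NormedAddCommGroup E] [NormedSpace ℂ E] (D : Set E) (x v : E)
    (δ : ℝ) (hδ : 0 < δ) (hb : ball x δ ⊆ D) :
    ‖v‖ / δ ∈ { r : ℝ | ∃ (f : ℂ → E) (ξ : ℂ),
    DifferentiableOn ℂ f (ball (0:ℂ) 1) ∧ MapsTo f (ball (0:ℂ) 1) D ∧
    f 0 = x ∧ ξ • derivWithin f (ball (0:ℂ) 1) 0 = v ∧ r = ‖ξ‖ } := by
  have h0 : (0:ℂ) ∈ ball (0:ℂ) 1 := by simp
  have hd : ∀ z, HasDerivAt (fun z : ℂ => x + z • (((δ / ‖v‖ : ℝ) : ℂ) • v))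
      (((δ / ‖v‖ : ℝ) : ℂ) • v) z := by
    intro z
    simpa using ((hasDerivAt_id z).smul_const (((δ / ‖v‖ : ℝ) : ℂ) • v)).const_add x
  refine ⟨fun z => x + z • (((δ / ‖v‖ : ℝ) : ℂ) • v), ((‖v‖ / δ : ℝ) : ℂ), ?_, ?_, by simp, ?_, ?_⟩
  · exact fun z _ => (hd z).differentiableAt.differentiableWithinAt
  · intro z hz
    apply hb
    rw [mem_ball_zero_iff] at hz
    rw [mem_ball_iff_norm]
    simp only [add_sub_cancel_left, norm_smul, Complex.norm_real, norm_div,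
      Real.norm_eq_abs, abs_of_pos hδ, abs_norm]
    by_cases hv : ‖v‖ = 0
    · simpa [hv] using hδ
    · rw [div_mul_cancel₀ _ hv]
      nlinarith
  · rw [derivWithin_of_isOpen isOpen_ball h0, (hd 0).deriv, smul_smul]
    by_cases hv : v = 0
    · simp [hv]
    · have : ‖v‖ ≠ 0 := by simpa using hv
      rw [← Complex.ofReal_mul]
      have h2 : ‖v‖ / δ * (δ / ‖v‖) = 1 := by field_simp
      rw [h2]; simp
  · rw [Complex.norm_real, Real.norm_eq_abs, abs_of_nonneg (by positivity)]

lemma kob_le {E : Type*} [NormedAddCommGroup E] [NormedSpace ℂ E] (D : Set E) (x v : E)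
    (δ : ℝ) (hδ : 0 < δ) (hb : ball x δ ⊆ D) : kobMetric D x v ≤ ‖v‖ / δ :=
  csInf_le (kob_bddBelow D x v) (kob_mem D x v δ hδ hb)

/-- Upper semicontinuity of the Kobayashi metric. -/
lemma kob_open {E : Type*} [NormedAddCommGroup E] [NormedSpace ℂ E] (D : Set E) (hD : IsOpen D)
    (c : ℝ) : IsOpen {p : E × E | p.1 ∈ D ∧ kobMetric D p.1 p.2 < c} := by
  rw [isOpen_iff_mem_nhds]
  rintro ⟨x, v⟩ ⟨hx, hk⟩
  simp only at hx hk
  have h0 : (0:ℂ) ∈ ball (0:ℂ) 1 := by simp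
  obtain ⟨δ₀, hδ₀, hb₀⟩ := Metric.isOpen_iff.1 hD x hx
  obtain ⟨r, ⟨f, ξ, hfd, hfm, hf0, hfv, rfl⟩, hr⟩ :=
    exists_lt_of_csInf_lt ⟨_, kob_mem D x v δ₀ hδ₀ hb₀⟩ hk
  obtain ⟨c', hc1, hc2⟩ := exists_between hr
  have hc' : 0 < c' := (norm_nonneg _).trans_lt hc1
  have hc'0 : (c' : ℂ) ≠ 0 := by exact_mod_cast hc'.ne'
  set s : ℂ := ξ / c' with hs
  have hs1 : ‖s‖ < 1 := by
    rw [hs, norm_div, Complex.norm_real, Real.norm_eq_abs, abs_of_pos hc']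
    exact (div_lt_one hc').2 hc1
  have hsub : closedBall (0:ℂ) ‖s‖ ⊆ ball 0 1 := closedBall_subset_ball hs1
  have hK : IsCompact (f '' closedBall (0:ℂ) ‖s‖) :=
    (isCompact_closedBall _ _).image_of_continuousOn (hfd.continuousOn.mono hsub)
  have hKD : f '' closedBall (0:ℂ) ‖s‖ ⊆ D := by
    rintro _ ⟨z, hz, rfl⟩
    exact hfm (hsub hz)
  obtain ⟨δ, hδ, hth⟩ := hK.exists_thickening_subset_open hD hKD
  have hnhds : ball x (δ/2) ×ˢ ball v (c' * (δ/2)) ∈ 𝓝 (x, v) :=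
    prod_mem_nhds (ball_mem_nhds _ (by positivity)) (ball_mem_nhds _ (by positivity))
  filter_upwards [hnhds]
  rintro ⟨x', v'⟩ ⟨hx', hv'⟩
  simp only [mem_ball_iff_norm] at hx' hv'
  have hsz : ∀ z ∈ ball (0:ℂ) 1, s * z ∈ closedBall (0:ℂ) ‖s‖ := by
    intro z hz
    rw [mem_ball_zero_iff] at hz
    rw [mem_closedBall_zero_iff, norm_mul]
    nlinarith [norm_nonneg s]
  let F : ℂ → E := fun z => f (s * z) + ((x' - x) + z • ((c' : ℂ)⁻¹ • (v' - v)))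
  have hFm : MapsTo F (ball (0:ℂ) 1) D := by
    intro z hz
    apply hth
    rw [mem_thickening_iff]
    refine ⟨f (s * z), mem_image_of_mem _ (hsz z hz), ?_⟩
    rw [dist_eq_norm, add_sub_cancel_left]
    rw [mem_ball_zero_iff] at hz
    have h3 : ‖z • ((c' : ℂ)⁻¹ • (v' - v))‖ ≤ δ / 2 := by
      rw [norm_smul, norm_smul, norm_inv, Complex.norm_real, Real.norm_eq_abs, abs_of_pos hc']
      have : c'⁻¹ * ‖v' - v‖ ≤ δ / 2 := by
        rw [inv_mul_le_iff₀ hc']; exact hv'.le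
      nlinarith [norm_nonneg z, mul_nonneg (inv_nonneg.2 hc'.le) (norm_nonneg (v' - v))]
    linarith [norm_add_le (x' - x) (z • ((c' : ℂ)⁻¹ • (v' - v)))]
  have hFd : ∀ z ∈ ball (0:ℂ) 1,
      HasDerivAt F (s • deriv f (s * z) + (c' : ℂ)⁻¹ • (v' - v)) z := by
    intro z hz
    have h4 : DifferentiableAt ℂ f (s * z) :=
      (hfd _ (hsub (hsz z hz))).differentiableAt (isOpen_ball.mem_nhds (hsub (hsz z hz)))
    have h5 : HasDerivAt (fun z => s * z) s z := by
      simpa using (hasDerivAt_id z).const_mul s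
    have h6 := h4.hasDerivAt.scomp z h5
    have h7 : HasDerivAt (fun z : ℂ => (x' - x) + z • ((c' : ℂ)⁻¹ • (v' - v)))
      ((c' : ℂ)⁻¹ • (v' - v)) z := by
      simpa using ((hasDerivAt_id z).smul_const ((c' : ℂ)⁻¹ • (v' - v))).const_add (x' - x)
    exact h6.add h7
  have hF0 : F 0 = x' := by simp [F, hf0]
  refine ⟨hF0 ▸ hFm h0, lt_of_le_of_lt (csInf_le (kob_bddBelow D x' v')
    ⟨F, (c' : ℂ), fun z hz => (hFd z hz).differentiableAt.differentiableWithinAt, hFm, hF0, ?_, rfl⟩)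
    ?_⟩
  · rw [derivWithin_of_isOpen isOpen_ball h0, (hFd 0 h0).deriv]
    rw [derivWithin_of_isOpen isOpen_ball h0] at hfv
    rw [mul_zero, smul_add, smul_smul, smul_smul, mul_inv_cancel₀ hc'0, hs, mul_div_cancel₀ _ hc'0,
      hfv]
    simp
  · rw [Complex.norm_real, Real.norm_eq_abs, abs_of_pos hc']; exact hc2

lemma kob_measurable {E : Type*} [NormedAddCommGroup E] [NormedSpace ℂ E]
    [MeasurableSpace E] [BorelSpace E] [SecondCountableTopology E] (D : Set E) (hD : IsOpen D) :
    Measurable (fun p : E × E => kobMetric D p.1 p.2) := by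
  apply measurable_of_Iio
  intro c
  have hout : ∀ x v : E, x ∉ D → kobMetric D x v = 0 := by
    intro x v hx
    unfold kobMetric
    convert! Real.sInf_empty
    rw [Set.eq_empty_iff_forall_notMem]
    rintro r ⟨f, ξ, -, hm, rfl, -, -⟩
    exact hx (hm (by simp))
  by_cases hc : 0 < c
  · have : (fun p : E × E => kobMetric D p.1 p.2) ⁻¹' Iio c =
        {p : E × E | p.1 ∈ D ∧ kobMetric D p.1 p.2 < c} ∪ (Prod.fst ⁻¹' D)ᶜ := by
      ext ⟨x, v⟩
      by_cases hx : x ∈ D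
      · simp [hx]
      · simp [hx, hout, hc]
    rw [this]
    exact (kob_open D hD c).measurableSet.union (measurable_fst hD.measurableSet).compl
  · convert! MeasurableSet.empty
    rw [Set.eq_empty_iff_forall_notMem]
    intro p hp
    exact hc ((kob_nonneg D p.1 p.2).trans_lt hp)

lemma ac_of_dominated (f Φ : ℝ → ℝ) (a b K : ℝ) (hK : 0 ≤ K)
    (hΦ : AbsolutelyContinuousOnInterval Φ a b)
    (h : ∀ s ∈ uIcc a b, ∀ t ∈ uIcc a b, dist (f s) (f t) ≤ K * dist (Φ s) (Φ t)) :
    AbsolutelyContinuousOnInterval f a b := by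
  rw [absolutelyContinuousOnInterval_iff] at hΦ ⊢
  intro ε hε
  obtain ⟨δ, hδ, H⟩ := hΦ (ε / (K + 1)) (by positivity)
  refine ⟨δ, hδ, fun I hI hI2 => ?_⟩
  calc _ ≤ ∑ i ∈ Finset.range I.1, K * dist (Φ (I.2 i).1) (Φ (I.2 i).2) :=
        Finset.sum_le_sum fun i hi => h _ (hI.1 i hi).1 _ (hI.1 i hi).2
    _ = K * ∑ i ∈ Finset.range I.1, dist (Φ (I.2 i).1) (Φ (I.2 i).2) := by
        rw [Finset.mul_sum]
    _ ≤ K * (ε / (K + 1)) := by gcongr; exact (H I hI hI2).le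
    _ < (K + 1) * (ε / (K + 1)) := by gcongr; linarith
    _ = ε := by field_simp

lemma log_dist_le (m p q : ℝ) (hm : 0 < m) (hp : m ≤ p) (hq : m ≤ q) :
    dist (Real.log p) (Real.log q) ≤ m⁻¹ * dist p q := by
  have key : ∀ p q : ℝ, m ≤ p → m ≤ q → Real.log p - Real.log q ≤ m⁻¹ * |p - q| := by
    intro p q hp hq
    have hp' : 0 < p := hm.trans_le hp
    have hq' : 0 < q := hm.trans_le hq
    rw [← Real.log_div hp'.ne' hq'.ne']
    have h1 := Real.log_le_sub_one_of_pos (div_pos hp' hq')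
    have h2 : p / q - 1 = q⁻¹ * (p - q) := by field_simp
    have h3 : q⁻¹ * (p - q) ≤ q⁻¹ * |p - q| := by gcongr; exact le_abs_self _
    have h4 : q⁻¹ * |p - q| ≤ m⁻¹ * |p - q| := by gcongr
    linarith
  rw [Real.dist_eq, Real.dist_eq, abs_le]
  have := key p q hp hq
  have h2 := key q p hq hp
  rw [abs_sub_comm] at h2
  constructor <;> linarith

lemma log_lower (a b : ℝ) (hab : a ≤ b) (g : ℝ → ℂ) (hg : IntervalIntegrable g volume a b)
    (u : ℝ → ℂ) (u0 : ℂ) (hu : ∀ t, u t = u0 + ∫ s in a..t, g s)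
    (hpos : ∀ t ∈ Icc a b, 0 < (u t).re) :
    IntervalIntegrable (fun t => ‖g t‖ / ‖u t‖) volume a b ∧
    Real.log ‖u a‖ - Real.log ‖u b‖ ≤ ∫ t in a..b, ‖g t‖ / ‖u t‖ := by
  have hIcc : uIcc a b = Icc a b := uIcc_of_le hab
  have hcont : ContinuousOn u (Icc a b) := by
    rw [← hIcc]
    have := intervalIntegral.continuousOn_primitive_interval' hg (left_mem_uIcc)
    exact (this.const_add u0 |>.congr fun t _ => hu t)
  have hne : ∀ t ∈ Icc a b, u t ≠ 0 := by
    intro t ht h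
    have := hpos t ht
    simp [h] at this
  obtain ⟨t₀, ht₀, hmin⟩ := isCompact_Icc.exists_isMinOn (nonempty_Icc.2 hab) hcont.norm
  have hm : 0 < ‖u t₀‖ := norm_pos_iff.2 (hne t₀ ht₀)
  set m := ‖u t₀‖
  have hmle : ∀ t ∈ Icc a b, m ≤ ‖u t‖ := fun t ht => hmin ht
  have hsubI : ∀ s ∈ Icc a b, ∀ t ∈ Icc a b, IntervalIntegrable g volume s t := by
    intro s hs t ht
    exact hg.mono_set (by rw [hIcc]; exact (ordConnected_Icc.uIcc_subset hs ht))
  have hΦ := hg.norm.absolutelyContinuousOnInterval_intervalIntegral (c := a) left_mem_uIcc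
  have hac : AbsolutelyContinuousOnInterval (fun t => Real.log ‖u t‖) a b := by
    refine ac_of_dominated _ _ a b m⁻¹ (by positivity) hΦ ?_
    rw [hIcc]
    intro s hs t ht
    refine (log_dist_le m _ _ hm (hmle s hs) (hmle t ht)).trans ?_
    gcongr
    have haI : a ∈ Icc a b := left_mem_Icc.2 hab
    rw [Real.dist_eq, Real.dist_eq]
    refine (abs_norm_sub_norm_le _ _).trans ?_
    rw [hu s, hu t, add_sub_add_left_eq_sub,
      intervalIntegral.integral_interval_sub_left (hsubI a haI s hs) (hsubI a haI t ht),
      intervalIntegral.integral_interval_sub_left (hsubI a haI s hs).norm (hsubI a haI t ht).norm]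
    exact intervalIntegral.norm_integral_le_abs_integral_norm
  have hint : IntervalIntegrable (fun t => ‖g t‖ / ‖u t‖) volume a b := by
    simp_rw [div_eq_mul_inv]
    refine hg.norm.mul_continuousOn ?_
    rw [hIcc]
    exact hcont.norm.inv₀ fun t ht => norm_ne_zero_iff.2 (hne t ht)
  refine ⟨hint, ?_⟩
  have hFTC := hac.integral_deriv_eq_sub
  have hle : ∫ t in a..b, -(‖g t‖ / ‖u t‖) ≤ ∫ t in a..b, deriv (fun t => Real.log ‖u t‖) t := by
    refine intervalIntegral.integral_mono_ae_restrict hab hint.neg hac.intervalIntegrable_deriv ?_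
    rw [Filter.EventuallyLE, ae_restrict_iff' measurableSet_Icc]
    filter_upwards [hg.ae_hasDerivAt_integral] with t ht htI
    have h1 : HasDerivAt u (g t) t := by
      have := (ht (hIcc ▸ htI) a left_mem_uIcc).const_add u0
      exact this.congr_of_eventuallyEq (Eventually.of_forall hu)
    have h2 := h1.clog_real (Or.inl (hpos t htI))
    have h3 : HasDerivAt (fun t => (Complex.log (u t)).re) (g t / u t).re t :=
      Complex.reCLM.hasFDerivAt.comp_hasDerivAt t h2
    simp only [Complex.log_re] at h3
    simp only [h3.deriv]
    rw [← norm_div]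
    exact neg_le_of_abs_le (Complex.abs_re_le_norm _)
  rw [intervalIntegral.integral_neg, hFTC] at hle
  linarith

theorem statement_12 {n : ℕ}
    (Ω : Set (EuclideanSpace ℂ (Fin n)))
    (hΩo : IsOpen Ω) (hne : Ω.Nonempty) (hΩb : Bornology.IsBounded Ω)
    (hconv : Convex ℝ Ω)
    (x y : EuclideanSpace ℂ (Fin n)) (hx : x ∈ Ω) (hy : y ∈ Ω) (hxy : x ≠ y)
    (ξ : EuclideanSpace ℂ (Fin n)) (hξ : ξ ∈ frontier Ω) (hline : ∃ c : ℂ, ξ = x + c • (x - y)) :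
    (1 / 2) * Real.log (‖x - ξ‖ / ‖y - ξ‖) ≤ kobDist Ω x y := by
  have hξΩ : ξ ∉ Ω := by
    rw [hΩo.frontier_eq] at hξ
    exact hξ.2
  obtain ⟨L, hL⟩ := RCLike.geometric_hahn_banach_open_point (𝕜 := ℂ) hconv hΩo hξΩ
  simp only [RCLike.re_to_complex] at hL
  -- infinitesimal lower bound
  have hkob : ∀ z ∈ Ω, ∀ v, ‖L v‖ / ‖L ξ - L z‖ ≤ 2 * kobMetric Ω z v := by
    intro z hz v
    have hzpos : 0 < (L ξ - L z).re := by simpa using hL z hz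
    have hzn : 0 < ‖L ξ - L z‖ := norm_pos_iff.2 (by intro h; simp [h] at hzpos)
    obtain ⟨δ, hδ, hb⟩ := Metric.isOpen_iff.1 hΩo z hz
    have : ‖L v‖ / ‖L ξ - L z‖ / 2 ≤ kobMetric Ω z v := by
      refine le_csInf ⟨_, kob_mem Ω z v δ hδ hb⟩ ?_
      rintro r ⟨f, η, hfd, hfm, rfl, hfv, rfl⟩
      have h0 : (0:ℂ) ∈ ball (0:ℂ) 1 := by simp
      have hf0 : DifferentiableAt ℂ f 0 := (hfd 0 h0).differentiableAt (isOpen_ball.mem_nhds h0)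
      rw [derivWithin_of_isOpen isOpen_ball h0] at hfv
      have h1 := aux_halfplane (fun w => L ξ - L (f w))
        ((L.differentiable.comp_differentiableOn hfd).const_sub (L ξ))
        (fun w hw => by simpa using hL _ (hfm hw))
      have h2 : HasDerivAt (fun w => L ξ - L (f w)) (-(L (deriv f 0))) 0 :=
        (L.hasFDerivAt.comp_hasDerivAt (0:ℂ) hf0.hasDerivAt).const_sub (L ξ)
      rw [h2.deriv, norm_neg] at h1
      have h3 : ‖L v‖ = ‖η‖ * ‖L (deriv f 0)‖ := by rw [← hfv, map_smul, norm_smul]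
      have h4 := Complex.re_le_norm (L ξ - L (f 0))
      rw [div_div, div_le_iff₀ (by positivity), h3]
      have := mul_le_mul_of_nonneg_left (h1.trans (mul_le_mul_of_nonneg_left h4 zero_le_two))
        (norm_nonneg η)
      linarith
    linarith
  obtain ⟨c, hc⟩ := hline
  have hratio : ‖x - ξ‖ / ‖y - ξ‖ = ‖L ξ - L x‖ / ‖L ξ - L y‖ := by
    have e1 : x - ξ = (-c) • (x - y) := by rw [hc]; module
    have e2 : y - ξ = (-(c + 1)) • (x - y) := by rw [hc]; module
    have hxpos : 0 < (L ξ - L x).re := by simpa using hL x hx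
    rw [norm_sub_rev (L ξ), norm_sub_rev (L ξ), ← map_sub, ← map_sub, e1, e2, map_smul, map_smul,
      norm_smul, norm_smul, norm_smul, norm_smul]
    have hn1 : ‖x - y‖ ≠ 0 := norm_ne_zero_iff.2 (sub_ne_zero.2 hxy)
    have hn2 : ‖L (x - y)‖ ≠ 0 := by
      rw [norm_ne_zero_iff]
      intro h
      have : L ξ - L x = 0 := by
        rw [← map_sub, ← neg_sub, e1, map_neg, map_smul, h]; simp
      simp [this] at hxpos
    rw [mul_div_mul_right _ _ hn1, mul_div_mul_right _ _ hn2]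
  have hLx : 0 < ‖L ξ - L x‖ :=
    norm_pos_iff.2 (by intro h; have := hL x hx; rw [sub_eq_zero.1 h] at this; exact lt_irrefl _ this)
  have hLy : 0 < ‖L ξ - L y‖ :=
    norm_pos_iff.2 (by intro h; have := hL y hy; rw [sub_eq_zero.1 h] at this; exact lt_irrefl _ this)
  rw [hratio, Real.log_div hLx.ne' hLy.ne']
  refine le_csInf ?_ ?_
  · refine ⟨_, 0, 1, fun t => x + t • (y - x), fun _ => y - x, zero_le_one, ⟨?_, ?_⟩, ?_, ?_, ?_, rfl⟩
    · exact intervalIntegrable_const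
    · intro t _
      simp [smul_sub]
    · intro t ht
      exact hconv.add_smul_sub_mem hx hy ht
    · simp
    · simp
  rintro r ⟨a, b, σ, g, hab, ⟨hg, hσ⟩, hmaps, hσa, hσb, rfl⟩
  have hIcc : uIcc a b = Icc a b := uIcc_of_le hab
  have hσc : ContinuousOn σ (Icc a b) := by
    have := intervalIntegral.continuousOn_primitive_interval' hg (left_mem_uIcc)
    rw [hIcc] at this
    exact (this.const_add (σ a)).congr hσ
  -- the transported curve
  have hLg : IntervalIntegrable (fun t => -(L (g t))) volume a b :=
    ⟨(L.integrable_comp hg.1).neg, (L.integrable_comp hg.2).neg⟩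
  let u : ℝ → ℂ := fun t => (L ξ - L x) + ∫ s in a..t, -(L (g s))
  have huσ : ∀ t ∈ Icc a b, u t = L ξ - L (σ t) := by
    intro t ht
    have hgt : IntervalIntegrable g volume a t :=
      hg.mono_set (by rw [hIcc]; exact ordConnected_Icc.uIcc_subset (left_mem_Icc.2 hab) ht)
    have : ∫ s in a..t, L (g s) = L (∫ s in a..t, g s) :=
      L.intervalIntegral_comp_comm hgt
    simp only [u]
    rw [intervalIntegral.integral_neg, this, hσ t ht, map_add, hσa]
    ring
  obtain ⟨hint, hlog⟩ := log_lower a b hab _ hLg u (L ξ - L x) (fun _ => rfl) (fun t ht => by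
    rw [huσ t ht]; simpa using hL _ (hmaps ht))
  rw [huσ a (left_mem_Icc.2 hab), huσ b (right_mem_Icc.2 hab), hσa, hσb] at hlog
  -- integrability of the Kobayashi length element
  have hkint : IntervalIntegrable (fun t => kobMetric Ω (σ t) (g t)) volume a b := by
    have hK : IsCompact (σ '' Icc a b) := isCompact_Icc.image_of_continuousOn hσc
    obtain ⟨δ, hδ, hth⟩ := hK.exists_thickening_subset_open hΩo (image_subset_iff.2 hmaps)
    rw [intervalIntegrable_iff_integrableOn_Ioc_of_le hab] at hg ⊢
    refine Integrable.mono' (hg.norm.div_const δ) ?_ ?_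
    · have h1 : AEMeasurable σ (volume.restrict (Ioc a b)) :=
        (hσc.mono Ioc_subset_Icc_self).aemeasurable measurableSet_Ioc
      have h2 : AEMeasurable g (volume.restrict (Ioc a b)) := hg.aestronglyMeasurable.aemeasurable
      exact ((kob_measurable Ω hΩo).comp_aemeasurable (h1.prodMk h2)).aestronglyMeasurable
    · rw [ae_restrict_iff' measurableSet_Ioc]
      refine Eventually.of_forall fun t ht => ?_
      rw [Real.norm_eq_abs, abs_of_nonneg (kob_nonneg _ _ _)]
      refine kob_le Ω _ _ δ hδ (Subset.trans ?_ hth)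
      exact ball_subset_thickening (mem_image_of_mem _ (Ioc_subset_Icc_self ht)) δ
  have hmono : ∫ t in a..b, ‖-(L (g t))‖ / ‖u t‖ ≤ ∫ t in a..b, 2 * kobMetric Ω (σ t) (g t) := by
    refine intervalIntegral.integral_mono_on hab hint (hkint.const_mul 2) ?_
    intro t ht
    rw [norm_neg, huσ t ht]
    exact hkob _ (hmaps ht) _
  rw [intervalIntegral.integral_const_mul] at hmono
  linarith
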